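/- arXiv:2211.12227 — 4 statements merged into one kernel-verified Lean document; each statement's English description precedes it below -/
import Mathlib

section
/- Let sel be a selection function and S₀ a set of Horn clauses. Then for every ground term F, F is derivable from the resolution closure Res(S₀, sel) if and only if F is derivable from S₀ (adding resolvents is sound: it does not enlarge the set of derivable ground facts). -/
/-!
A derivation from `S₀` is a derivation from the closure because `S₀` is contained in it.
Conversely, `ResClosure.admissible` shows, by induction on the closure, that `S₀` derives the
conclusion of any instance of a closure clause whose hypotheses it derives; an induction on the
derivation then eliminates the added clauses.
-/

open FirstOrder Language

/-- A Horn clause: a finite set of hypotheses together with a conclusion. -/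
abbrev HornClause (L : FirstOrder.Language) : Type _ := Finset (L.Term ℕ) × L.Term ℕ

/-- A term is ground if it contains no variables. -/
def IsGround {L : FirstOrder.Language} (t : L.Term ℕ) : Prop := t.varFinset = ∅

/-- Derivability of a term from a set of Horn clauses: `F` is derivable iff there are a
clause `(H, C) ∈ S` and a substitution `σ` with `C·σ = F` and every `A·σ` (`A ∈ H`)
derivable. -/
inductive Derivable {L : FirstOrder.Language} (S : Set (HornClause L)) : L.Term ℕ → Prop where
  | step (H : Finset (L.Term ℕ)) (C : L.Term ℕ) (σ : ℕ → L.Term ℕ) :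
      (H, C) ∈ S → (∀ A ∈ H, Derivable S (A.subst σ)) → Derivable S (C.subst σ)

/-- A selection function: it assigns to each clause either one of its hypotheses or
its conclusion. -/
structure Selection (L : FirstOrder.Language) where
  sel : HornClause L → L.Term ℕ
  sel_mem : ∀ R : HornClause L, sel R ∈ R.1 ∨ sel R = R.2

/-- `σ` is a most general unifier of `s` and `t`. -/
def IsMGU {L : FirstOrder.Language} (σ : ℕ → L.Term ℕ) (s t : L.Term ℕ) : Prop :=
  s.subst σ = t.subst σ ∧
    ∀ τ : ℕ → L.Term ℕ, s.subst τ = t.subst τ →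
      ∃ ρ : ℕ → L.Term ℕ, ∀ u : L.Term ℕ, u.subst τ = (u.subst σ).subst ρ

/-- The resolventClause of `R` (selected conclusion) and `R'` (selected hypothesis `F'`)
upon the unifier `σ`: `((H ∪ (H' \ {F'}))·σ, C'·σ)`. -/
def resolventClause {L : FirstOrder.Language} [DecidableEq (L.Term ℕ)]
    (R R' : HornClause L) (F' : L.Term ℕ) (σ : ℕ → L.Term ℕ) : HornClause L :=
  ((R.1 ∪ R'.1.erase F').image (fun A => A.subst σ), R'.2.subst σ)

/-- The resolution closure `Res(S₀, sel)`: the smallest set of clauses containing `S₀`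
and closed under adding resolvents upon mgus of the selected literals. -/
inductive ResClosure {L : FirstOrder.Language} [DecidableEq (L.Term ℕ)]
    (sel : Selection L) (S₀ : Set (HornClause L)) : HornClause L → Prop where
  | base {R : HornClause L} : R ∈ S₀ → ResClosure sel S₀ R
  | resolve {R R' : HornClause L} {σ : ℕ → L.Term ℕ} :
      ResClosure sel S₀ R → ResClosure sel S₀ R' →
      sel.sel R = R.2 → sel.sel R' ∈ R'.1 →
      IsMGU σ R.2 (sel.sel R') →
      ResClosure sel S₀ (resolventClause R R' (sel.sel R') σ)

/-- Substituting twice is substituting once along the composite substitution. -/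
theorem term_subst_subst {L : FirstOrder.Language} (t : L.Term ℕ) (σ τ : ℕ → L.Term ℕ) :
    (t.subst σ).subst τ = t.subst (fun n => (σ n).subst τ) := by
  induction t with
  | var n => rfl
  | func f ts ih => simp only [Term.subst, ih]

theorem Derivable.mono {L : FirstOrder.Language} {S T : Set (HornClause L)} (hST : S ⊆ T)
    {F : L.Term ℕ} (h : Derivable S F) : Derivable T F := by
  induction h with
  | step H C σ hR _ ih => exact Derivable.step H C σ (hST hR) ih

/-- Every clause of the resolution closure is an admissible inference rule for `S₀`. For a
resolvent upon `σ`, the instance by `τ` is obtained by instantiating both parents with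
`σ` followed by `τ`: the first parent derives the selected hypothesis of the second. -/
theorem ResClosure.admissible {L : FirstOrder.Language} [DecidableEq (L.Term ℕ)]
    {sel : Selection L} {S₀ : Set (HornClause L)} {R : HornClause L}
    (h : ResClosure sel S₀ R) (τ : ℕ → L.Term ℕ)
    (hyp : ∀ A ∈ R.1, Derivable S₀ (A.subst τ)) : Derivable S₀ (R.2.subst τ) := by
  induction h generalizing τ with
  | base hR => exact Derivable.step _ _ τ hR hyp
  | @resolve R R' σ _ _ _ _ hσ ih ih' =>
    have hyp' : ∀ A ∈ R.1 ∪ R'.1.erase (sel.sel R'),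
        Derivable S₀ (A.subst fun n => (σ n).subst τ) := fun A hA => by
      rw [← term_subst_subst]
      exact hyp _ (Finset.mem_image_of_mem _ hA)
    have hsel : Derivable S₀ ((sel.sel R').subst fun n => (σ n).subst τ) := by
      rw [← term_subst_subst, ← hσ.1, term_subst_subst]
      exact ih _ fun A hA => hyp' A (Finset.mem_union_left _ hA)
    change Derivable S₀ ((R'.2.subst σ).subst τ)
    rw [term_subst_subst]
    refine ih' _ fun A hA => ?_
    by_cases hAF : A = sel.sel R'
    · rw [hAF]
      exact hsel
    · exact hyp' A (Finset.mem_union_right _ (Finset.mem_erase.mpr ⟨hAF, hA⟩))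

/-- Adding resolvents is sound: the resolution closure `Res(S₀, sel)` derives exactly
the same ground facts as the initial clauses `S₀`. -/
theorem resolution_closure_sound (L : FirstOrder.Language) [DecidableEq (L.Term ℕ)]
    (sel : Selection L) (S₀ : Set (HornClause L))
    (F : L.Term ℕ) (hF : IsGround F) :
    Derivable {R : HornClause L | ResClosure sel S₀ R} F ↔ Derivable S₀ F := by
  constructor
  · intro h
    clear hF
    induction h with
    | step H C σ hR _ ih => exact ResClosure.admissible hR σ ih
  · exact Derivable.mono fun _ hR => ResClosure.base hR
end

section
/- Let S be a set of Horn clauses and R = (H, C) a clause whose conclusion appears among its hypotheses, i.e., C ∈ H. Then for every ground term F, F is derivable from S ∪ {R} if and only if F is derivable from S (elimination of tautologies preserves derivable facts). -/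
open FirstOrder Language

/-- Elimination of tautologies preserves derivable ground facts: adding a clause whose
conclusion appears among its hypotheses does not change the derivable ground facts. -/
theorem tautology_elimination (L : FirstOrder.Language)
    (S : Set (HornClause L)) (H : Finset (L.Term ℕ)) (C : L.Term ℕ) (hC : C ∈ H)
    (F : L.Term ℕ) (hF : IsGround F) :
    Derivable (S ∪ {(H, C)}) F ↔ Derivable S F := by
  -- Intermediate facts in a derivation need not be ground, so the induction is over all terms.
  clear hF
  constructor
  · intro h
    induction h with
    | step H' C' σ hmem _ ih =>
      rcases hmem with hS | hR
      · exact .step H' C' σ hS ih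
      -- An instance of the tautology concludes one of its own hypotheses, already derived from `S`.
      · obtain ⟨rfl, rfl⟩ := Prod.mk.inj hR
        exact ih _ hC
  · intro h
    induction h with
    | step H' C' σ hmem _ ih => exact .step H' C' σ (Or.inl hmem) ih
end

section
/- Let f be an n-ary function symbol of L and let S be a set of Horn clauses containing the constructor clause ({x₁, …, xₙ}, f(x₁, …, xₙ)) and, for each 1 ≤ i ≤ n, the projection clause ({f(x₁, …, xₙ)}, xᵢ), where x₁, …, xₙ are pairwise distinct variables. Let R = ({f(t₁, …, tₙ)} ∪ H, C) be a clause with a hypothesis headed by f, and let R̃ = ({t₁, …, tₙ} ∪ H, C) be the clause obtained by decomposing that hypothesis. Then for every ground term F, F is derivable from S ∪ {R} if and only if F is derivable from S ∪ {R̃} (decomposition of data constructors in hypotheses preserves derivable facts). -/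
/-!
In any clause set containing the constructor and projection clauses for `f`, a term
`f(s₁, …, sₙ)` is derivable iff all the `sᵢ` are (`derivable_func_iff`). Hence, for every
substitution, the instantiated hypotheses of `R` are all derivable iff those of `R̃` are, so each
of the two clauses can be simulated in the system containing the other
(`Derivable.of_simulates`).
-/

open FirstOrder Language

/-- If every clause of `S` is an admissible rule of `S'`, then `S'` derives all that `S` derives. -/
theorem Derivable.of_simulates {L : FirstOrder.Language} {S S' : Set (HornClause L)}
    (h : ∀ H C, (H, C) ∈ S → ∀ σ : ℕ → L.Term ℕ,
      (∀ A ∈ H, Derivable S' (A.subst σ)) → Derivable S' (C.subst σ))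
    {F : L.Term ℕ} (hF : Derivable S F) : Derivable S' F := by
  induction hF with
  | step H C σ hmem _ ih => exact h H C hmem σ ih

theorem derivable_func_iff {L : FirstOrder.Language} [DecidableEq (L.Term ℕ)] {n : ℕ}
    {f : L.Functions n} {S : Set (HornClause L)} {v : Fin n → ℕ} (hv : Function.Injective v)
    (hcons : ((Finset.univ.image fun i : Fin n => (Term.var (v i) : L.Term ℕ)),
        Term.func f (fun i => Term.var (v i))) ∈ S)
    (hproj : ∀ i : Fin n,
        (({Term.func f (fun j => Term.var (v j))} : Finset (L.Term ℕ)),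
          (Term.var (v i) : L.Term ℕ)) ∈ S)
    (s : Fin n → L.Term ℕ) :
    Derivable S (Term.func f s) ↔ ∀ i, Derivable S (s i) := by
  -- A substitution sending `v i` to `s i`; it exists because the variables `v i` are distinct.
  obtain ⟨σ, hσ⟩ : ∃ σ : ℕ → L.Term ℕ, ∀ i, σ (v i) = s i :=
    ⟨Function.extend v s Term.var, fun i => hv.extend_apply s _ i⟩
  have hfunc : (Term.func f (fun i => Term.var (v i)) : L.Term ℕ).subst σ = Term.func f s := by
    simp [Term.subst, hσ]
  constructor
  · intro h i
    have key := Derivable.step _ _ σ (hproj i) (by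
      intro A hA
      rw [Finset.mem_singleton.1 hA, hfunc]
      exact h)
    simpa [Term.subst, hσ] using key
  · intro h
    rw [← hfunc]
    refine Derivable.step _ _ σ hcons ?_
    intro A hA
    obtain ⟨i, -, rfl⟩ := Finset.mem_image.1 hA
    simpa [Term.subst, hσ] using h i

/-- Decomposition of data constructors in hypotheses preserves derivable ground facts:
if `S` contains the constructor and projection clauses for `f`, replacing the clause
`R = ({f(t₁, …, tₙ)} ∪ H, C)` by `R̃ = ({t₁, …, tₙ} ∪ H, C)` does not change the
derivable ground facts. -/
theorem decompose_data_constructor_hyp (L : FirstOrder.Language)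
    [DecidableEq (L.Term ℕ)] {n : ℕ} (f : L.Functions n)
    (S : Set (HornClause L)) (v : Fin n → ℕ) (hv : Function.Injective v)
    (hcons : ((Finset.univ.image fun i : Fin n => (Term.var (v i) : L.Term ℕ)),
        Term.func f (fun i => Term.var (v i))) ∈ S)
    (hproj : ∀ i : Fin n,
        (({Term.func f (fun j => Term.var (v j))} : Finset (L.Term ℕ)),
          (Term.var (v i) : L.Term ℕ)) ∈ S)
    (t : Fin n → L.Term ℕ) (H : Finset (L.Term ℕ)) (C : L.Term ℕ)
    (F : L.Term ℕ) (hF : IsGround F) :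
    Derivable (S ∪ {(insert (Term.func f t) H, C)}) F ↔
      Derivable (S ∪ {(Finset.univ.image t ∪ H, C)}) F := by
  have hyps : ∀ S' : Set (HornClause L), S ⊆ S' → ∀ σ : ℕ → L.Term ℕ,
      (∀ A ∈ insert (Term.func f t) H, Derivable S' (A.subst σ)) ↔
        ∀ A ∈ Finset.univ.image t ∪ H, Derivable S' (A.subst σ) := by
    intro S' hS σ
    have key := derivable_func_iff hv (hS hcons) (fun i => hS (hproj i)) fun i => (t i).subst σ
    simp only [Finset.forall_mem_insert, Finset.forall_mem_union, Finset.forall_mem_image,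
      Finset.mem_univ, true_imp_iff, Term.subst, key]
  constructor <;> refine Derivable.of_simulates ?_ <;> rintro H' C' (hmem | hmem) σ hA
  · exact Derivable.step H' C' σ (Or.inl hmem) hA
  · obtain ⟨rfl, rfl⟩ := Prod.mk.inj hmem
    exact Derivable.step _ _ σ (Or.inr rfl) ((hyps _ Set.subset_union_left σ).1 hA)
  · exact Derivable.step H' C' σ (Or.inl hmem) hA
  · obtain ⟨rfl, rfl⟩ := Prod.mk.inj hmem
    exact Derivable.step _ _ σ (Or.inr rfl) ((hyps _ Set.subset_union_left σ).2 hA)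
end

section
/- In the language L_ex and for the clause set S_ex of the decryption-oracle example, the ground term k is NOT derivable from S_ex (the long-term key k remains secret even at the Horn clause level). -/
/-!
Interpret `LangEx` in the two-element structure of truth values, reading "true" as "may be known to
the adversary": `k` is false, every other constant is true, a pair is true iff both components are,
and a ciphertext `senc x y` has the truth value of its plaintext `x`. Each clause of `Sex` is valid
in this structure, so every derivable term is true under every valuation
(`realize_of_derivable`), whereas `k` is false.
-/

open FirstOrder Language

/-- The constant symbols of the example language: `k`, `k₁`, `k₂`, `s`. -/
inductive ExConst : Type
  | k | k1 | k2 | s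
  deriving DecidableEq

/-- The binary function symbols of the example language: `senc` and `pair`. -/
inductive ExBin : Type
  | senc | pair
  deriving DecidableEq

/-- The function symbols of the example language, by arity. -/
def ExFun : ℕ → Type
  | 0 => ExConst
  | 2 => ExBin
  | _ => Empty

/-- The example language `L_ex`. -/
def LangEx : FirstOrder.Language := ⟨ExFun, fun _ => Empty⟩

noncomputable instance : DecidableEq (LangEx.Term ℕ) := Classical.decEq _

/-- The constant term associated to a constant symbol. -/
def cst (c : ExConst) : LangEx.Term ℕ := Term.func (l := 0) c ![]

/-- Application of a binary function symbol to two terms. -/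
def bin (f : ExBin) (t u : LangEx.Term ℕ) : LangEx.Term ℕ := Term.func (l := 2) f ![t, u]

/-- The variable `x`. -/
def xV : LangEx.Term ℕ := Term.var 0

/-- The variable `y`. -/
def yV : LangEx.Term ℕ := Term.var 1

/-- The clause set `S_ex` of the decryption-oracle example. -/
def Sex : Set (HornClause LangEx) :=
  { (∅, bin .senc (cst .k1) (cst .k)),
    (∅, bin .senc (cst .k2) (cst .k)),
    (∅, bin .senc (cst .s) (bin .pair (cst .k1) (cst .k2))),
    ({bin .senc yV (cst .k)}, yV),
    ({xV, yV}, bin .pair xV yV),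
    ({xV, yV}, bin .senc xV yV),
    ({bin .senc xV yV, yV}, xV) }

/-- The model on truth values: `k` is false, the other constants are true, `pair` is conjunction,
and `senc` is the projection to the plaintext. -/
instance secrecyModel : LangEx.Structure Prop where
  funMap {n} := match n with
    | 0 => fun (c : ExConst) _ => c ≠ .k
    | 2 => fun (f : ExBin) v => match f with
      | .senc => v 0
      | .pair => v 0 ∧ v 1
    | 1 => fun f _ => nomatch (f : Empty)
    | _ + 3 => fun f _ => nomatch (f : Empty)
  RelMap r := nomatch (r : Empty)

lemma realize_cst (c : ExConst) (v : ℕ → Prop) : (cst c).realize v = (c ≠ .k) := rfl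

lemma realize_senc (t u : LangEx.Term ℕ) (v : ℕ → Prop) :
    (bin .senc t u).realize v = t.realize v := rfl

lemma realize_pair (t u : LangEx.Term ℕ) (v : ℕ → Prop) :
    (bin .pair t u).realize v = (t.realize v ∧ u.realize v) := rfl

/-- Soundness: every clause of `Sex` is valid in `secrecyModel`, hence so is every derivable
term. -/
lemma realize_of_derivable {F : LangEx.Term ℕ} (h : Derivable Sex F) (v : ℕ → Prop) :
    F.realize v := by
  induction h with
  | step H C σ hS _ ih =>
    simp only [Term.realize_subst] at ih ⊢
    simp only [Sex, Set.mem_insert_iff, Set.mem_singleton_iff, Prod.mk.injEq] at hS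
    rcases hS with ⟨rfl, rfl⟩ | ⟨rfl, rfl⟩ | ⟨rfl, rfl⟩ | ⟨rfl, rfl⟩ | ⟨rfl, rfl⟩ | ⟨rfl, rfl⟩ |
      ⟨rfl, rfl⟩ <;>
    simp_all [realize_cst, realize_senc, realize_pair]

/-- The long-term key `k` remains secret even at the Horn clause level: `k` is not
derivable from `S_ex`. -/
theorem k_not_derivable : ¬ Derivable Sex (cst .k) := by
  intro h
  exact realize_of_derivable h (fun _ => True) rfl
end
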